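/- Let L be a finite weighted propositional theory (an MLN) over finite signature σ, all of whose weights are real numbers, and let Π_L be the LP^MLN program obtained by replacing each weighted formula w : F with the weighted constraint w : ⊥ ← ¬F and adding, for every atom A of σ, a choice rule w_A : A ← ¬¬A (with arbitrary real weight w_A). Then every interpretation I of σ is a stable model of the unweighted program consisting of those rules of Π_L satisfied by I; consequently L and Π_L induce the same probability distribution over interpretations (the normalized exponentiated sums of weights of satisfied formulas, adjusted by the constant factor exp(Σ_A w_A), agree). -/

import Mathlib

/-!
The constraints `⊥ ← ¬F` have the same satisfaction relation as the formulas `F`, so they reproduce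
the MLN weight. The choice rules are satisfied by every interpretation and force each atom of `I`
into every model of the reduct relative to `I`, so every interpretation is stable (`stable_PiL`).
The two weights then differ by the constant positive factor `exp (∑ A, wA A)` (`WPiL_eq`), which
cancels on normalization.
-/

open Finset Filter Real
open scoped Classical

/-- A ground rule `A ← B ∧ N`: `head` is the disjunction of atoms `A`,
`body` the conjunction of atoms `B`, and `neg` gives the satisfaction
relation of the negative formula `N`. -/
structure GRule (σ : Type) where
  head : Finset σ
  body : Finset σ
  neg : Finset σ → Prop

namespace GRule
variable {σ : Type}

/-- `I` classically satisfies the rule `B ∧ N → A`. -/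
def sat (r : GRule σ) (I : Finset σ) : Prop :=
  r.body ⊆ I → r.neg I → ∃ a ∈ r.head, a ∈ I

/-- `J` satisfies the reduct `Γ^I` of the program `Γ` relative to `I`. -/
def satReduct (Γ : Set (GRule σ)) (I J : Finset σ) : Prop :=
  ∀ r ∈ Γ, r.neg I → r.body ⊆ J → ∃ a ∈ r.head, a ∈ J

/-- `I` is a stable model of `Γ`: a minimal model of the reduct `Γ^I`. -/
def stable (Γ : Set (GRule σ)) (I : Finset σ) : Prop :=
  satReduct Γ I I ∧ ∀ J, J ⊂ I → ¬ satReduct Γ I J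

/-- Indexed version of reduct satisfaction (a program given by an index set of rules). -/
def satReductIdx {ι : Type} (rule : ι → GRule σ) (S : Set ι) (I J : Finset σ) : Prop :=
  ∀ i ∈ S, (rule i).neg I → (rule i).body ⊆ J → ∃ a ∈ (rule i).head, a ∈ J

/-- Indexed version of stable models. -/
def stableIdx {ι : Type} (rule : ι → GRule σ) (S : Set ι) (I : Finset σ) : Prop :=
  satReductIdx rule S I I ∧ ∀ J, J ⊂ I → ¬ satReductIdx rule S I J

end GRule

section MLNEmbed
variable {σ ι : Type} [Fintype σ] [DecidableEq σ] [Fintype ι]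

/-- The constraint `⊥ ← ¬F` obtained from an MLN formula with satisfaction relation `F`. -/
def conFormRule (F : Finset σ → Prop) : GRule σ := ⟨∅, ∅, fun J => ¬ F J⟩

/-- The choice rule `A ← ¬¬A`. -/
def choiceRule (A : σ) : GRule σ := ⟨{A}, ∅, fun J => A ∈ J⟩

/-- The LP^MLN program `Π_L` obtained from the MLN `L`. -/
def PiL (F : ι → Finset σ → Prop) : Set (GRule σ) :=
  {r | ∃ i, r = conFormRule (F i)} ∪ {r | ∃ A : σ, r = choiceRule A}

/-- The LP^MLN weight of `I` under `Π_L` (choice rules, always satisfied, contribute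
the constant `∑ A, wA A`). -/
noncomputable def WPiL (F : ι → Finset σ → Prop) (w : ι → ℝ) (wA : σ → ℝ)
    (I : Finset σ) : ℝ :=
  Set.indicator {J | GRule.stable {r | r ∈ PiL F ∧ r.sat J} J}
    (fun J => Real.exp
      ((∑ i ∈ Finset.univ.filter (fun i => (conFormRule (F i)).sat J), w i) +
        ∑ A : σ, wA A)) I

end MLNEmbed

/-- A choice rule is classically a tautology, and it contributes the fact `A` to the reduct
relative to any interpretation containing `A`. Hence a model of the reduct relative to `I`
contains `I`, which is the minimality half of stability. -/
theorem stable_PiL {σ ι : Type} [Fintype σ] [DecidableEq σ] [Fintype ι]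
    (F : ι → Finset σ → Prop) (I : Finset σ) :
    GRule.stable {r | r ∈ PiL F ∧ r.sat I} I := by
  refine ⟨fun r hr hn hb => hr.2 hb hn, fun J hJ hred => hJ.2 fun A hA => ?_⟩
  have hmem : choiceRule A ∈ {r | r ∈ PiL F ∧ r.sat I} :=
    ⟨Or.inr ⟨A, rfl⟩, fun _ _ => ⟨A, Finset.mem_singleton_self A, hA⟩⟩
  obtain ⟨a, ha, haJ⟩ := hred _ hmem hA (Finset.empty_subset J)
  rwa [Finset.mem_singleton.mp ha] at haJ

theorem conFormRule_sat {σ : Type} (F : Finset σ → Prop) (I : Finset σ) :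
    (conFormRule F).sat I ↔ F I := by
  simp [GRule.sat, conFormRule]

/-- Stability of every interpretation removes the indicator, and the choice rules
only rescale the weight by a constant. -/
theorem WPiL_eq {σ ι : Type} [Fintype σ] [DecidableEq σ] [Fintype ι]
    (F : ι → Finset σ → Prop) (w : ι → ℝ) (wA : σ → ℝ) (I : Finset σ) :
    WPiL F w wA I =
      Real.exp (∑ i ∈ Finset.univ.filter (fun i => F i I), w i) *
        Real.exp (∑ A : σ, wA A) := by
  have hI : I ∈ {J | GRule.stable {r | r ∈ PiL F ∧ r.sat J} J} := stable_PiL F I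
  rw [WPiL, Set.indicator_of_mem hI, Real.exp_add]
  simp only [conFormRule_sat]

/-- Theorem 2: every interpretation is a stable model of the set of rules of `Π_L` it
satisfies, and the MLN `L` and its LP^MLN representation `Π_L` induce the same
probability distribution over interpretations. -/
theorem stmt11 {σ ι : Type} [Fintype σ] [DecidableEq σ] [Fintype ι]
    (F : ι → Finset σ → Prop) (w : ι → ℝ) (wA : σ → ℝ) :
    (∀ I : Finset σ, GRule.stable {r | r ∈ PiL F ∧ r.sat I} I) ∧
    (∀ I : Finset σ,
      Real.exp (∑ i ∈ Finset.univ.filter (fun i => F i I), w i) /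
          (∑ J : Finset σ, Real.exp (∑ i ∈ Finset.univ.filter (fun i => F i J), w i)) =
        WPiL F w wA I / ∑ J : Finset σ, WPiL F w wA J) := by
  refine ⟨stable_PiL F, fun I => ?_⟩
  simp only [WPiL_eq, ← Finset.sum_mul]
  rw [mul_div_mul_right _ _ (Real.exp_pos _).ne']
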